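/- Let $t > 0$, $x \in \mathbb{R}^d$, $b \in \mathbb{R}^d$, $\sigma_0 \in \mathbb{M}^d$ invertible, and $\phi : \mathbb{R}^d \to \mathbb{R}$ bounded continuous. Let $W_t \sim \mathcal{N}(0, t I_d)$. Then $D^2_x\, \mathbb{E}\big[\phi(x + bt + \sigma_0 W_t)\big] = \mathbb{E}\Big[\phi(x + bt + \sigma_0 W_t)\,(\sigma_0^\top)^{-1}\,\frac{W_t W_t^\top - t I_d}{t^2}\,\sigma_0^{-1}\Big]$, where $D^2_x$ denotes the Hessian with respect to $x$. -/

import Mathlib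

open MeasureTheory ProbabilityTheory

/-!
Fix `x` and put `f w = φ (x + m + σ w)`. Since `φ (x + z + m + σ w) = f (w + σ⁻¹ z)`, the
Cameron–Martin formula moves the dependence on `z` from `φ` into an exponential density:
`F (x + z) = exp (-|σ⁻¹ z|² / (2t)) * E[exp (⟨W, σ⁻¹ z⟩ / t) f(W)]`.
The right-hand side is smooth in `z` whatever the regularity of `φ`, because the exponential may be
differentiated under the integral, and its Hessian at `z = 0` brings down the weight.
-/

open Real (exp)
open scoped NNReal ENNReal ContDiff Matrix

section STransform

variable {X V E : Type*} {mX : MeasurableSpace X} {μ : Measure X}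
  [NormedAddCommGroup V] [NormedSpace ℝ V] [NormedAddCommGroup E] [NormedSpace ℝ E]
  {L : X → StrongDual ℝ V} {f : X → E}

/-- `f` remains integrable after multiplication by any exponential of the norm of the random
functional `L`; this is what makes its Laplace transform along `L` smooth on all of `V`. -/
structure ExpIntegrable (μ : Measure X) (L : X → StrongDual ℝ V) (f : X → E) : Prop where
  aestronglyMeasurable_functional : AEStronglyMeasurable L μ
  integrable_exp_mul_norm_smul (R : ℝ) : Integrable (fun x ↦ exp (R * ‖L x‖) • f x) μ

/-- The (unnormalized) Laplace transform `v ↦ E[exp (L v) f]` of `f` along the random functional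
`L`. -/
noncomputable def laplaceTransform (μ : Measure X) (L : X → StrongDual ℝ V) (f : X → E)
    (v : V) : E :=
  ∫ x, exp (L x v) • f x ∂μ

/-- The S-transform of Gaussian analysis, `v ↦ exp (-B(v, v) / 2) E[exp (L v) f]`. The bilinear
form `B` stands for the covariance of `L`, so that the prefactor normalizes the exponential, but
this relation is not part of the definition. -/
noncomputable def sTransform (μ : Measure X) (L : X → StrongDual ℝ V) (B : V →L[ℝ] V →L[ℝ] ℝ)
    (f : X → E) (v : V) : E :=
  exp (-2⁻¹ * B v v) • laplaceTransform μ L f v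

lemma apply_le_of_norm_le (l : StrongDual ℝ V) {v : V} {r : ℝ} (hv : ‖v‖ ≤ r) :
    l v ≤ r * ‖l‖ :=
  calc l v ≤ ‖l v‖ := le_abs_self _
    _ ≤ ‖l‖ * ‖v‖ := l.le_opNorm v
    _ ≤ r * ‖l‖ := by rw [mul_comm]; gcongr

lemma norm_smulRight_exp_smul_le (l : StrongDual ℝ V) (y : E) {v : V} {r : ℝ} (hv : ‖v‖ ≤ r) :
    ‖l.smulRight (exp (l v) • y)‖ ≤ ‖exp ((r + 1) * ‖l‖) • y‖ := by
  have h_exp : ‖l‖ * exp (l v) ≤ exp ((r + 1) * ‖l‖) :=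
    calc ‖l‖ * exp (l v) ≤ exp ‖l‖ * exp (r * ‖l‖) := by
          gcongr
          · linarith [Real.add_one_le_exp ‖l‖]
          · exact apply_le_of_norm_le l hv
      _ = exp ((r + 1) * ‖l‖) := by rw [← Real.exp_add]; ring_nf
  rw [ContinuousLinearMap.norm_smulRight_apply, norm_smul, norm_smul, Real.norm_eq_abs,
    Real.norm_eq_abs, Real.abs_exp, Real.abs_exp, ← mul_assoc]
  gcongr

namespace ExpIntegrable

lemma aestronglyMeasurable (hf : ExpIntegrable μ L f) : AEStronglyMeasurable f μ := by
  simpa only [zero_mul, Real.exp_zero, one_smul] using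
    (hf.integrable_exp_mul_norm_smul 0).aestronglyMeasurable

lemma aestronglyMeasurable_exp_smul (hf : ExpIntegrable μ L f) (v : V) :
    AEStronglyMeasurable (fun x ↦ exp (L x v) • f x) μ :=
  (Real.continuous_exp.comp_aestronglyMeasurable
    (hf.aestronglyMeasurable_functional.apply_continuousLinearMap v)).smul hf.aestronglyMeasurable

lemma integrable_exp_smul (hf : ExpIntegrable μ L f) (v : V) :
    Integrable (fun x ↦ exp (L x v) • f x) μ := by
  refine (hf.integrable_exp_mul_norm_smul ‖v‖).norm.mono' (hf.aestronglyMeasurable_exp_smul v)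
    (.of_forall fun x ↦ ?_)
  simp only [norm_smul, Real.norm_eq_abs, Real.abs_exp]
  gcongr
  exact apply_le_of_norm_le (L x) le_rfl

lemma integrable (hf : ExpIntegrable μ L f) : Integrable f μ := by
  simpa only [map_zero, Real.exp_zero, one_smul] using hf.integrable_exp_smul 0

lemma aestronglyMeasurable_smulRight (hf : ExpIntegrable μ L f) (v : V) :
    AEStronglyMeasurable (fun x ↦ (L x).smulRight (exp (L x v) • f x)) μ :=
  (ContinuousLinearMap.smulRightL ℝ V E).aestronglyMeasurable_comp₂
    hf.aestronglyMeasurable_functional (hf.aestronglyMeasurable_exp_smul v)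

lemma integrable_smulRight (hf : ExpIntegrable μ L f) (v : V) :
    Integrable (fun x ↦ (L x).smulRight (exp (L x v) • f x)) μ :=
  (hf.integrable_exp_mul_norm_smul (‖v‖ + 1)).norm.mono' (hf.aestronglyMeasurable_smulRight v)
    (.of_forall fun x ↦ norm_smulRight_exp_smul_le (L x) (f x) le_rfl)

lemma apply_smul (hf : ExpIntegrable μ L f) (e : V) : ExpIntegrable μ L (fun x ↦ L x e • f x) := by
  have hL := hf.aestronglyMeasurable_functional
  refine ⟨hL, fun R ↦ ?_⟩
  have h_meas : AEStronglyMeasurable (fun x ↦ exp (R * ‖L x‖) • L x e • f x) μ :=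
    (Real.continuous_exp.comp_aestronglyMeasurable (hL.norm.const_mul R)).smul
      ((hL.apply_continuousLinearMap e).smul hf.aestronglyMeasurable)
  refine ((hf.integrable_exp_mul_norm_smul (R + 1)).norm.const_mul ‖e‖).mono' h_meas
    (.of_forall fun x ↦ ?_)
  have h_exp : |L x e| ≤ ‖e‖ * exp ‖L x‖ :=
    calc |L x e| ≤ ‖L x‖ * ‖e‖ := (L x).le_opNorm e
      _ ≤ ‖e‖ * exp ‖L x‖ := by
        rw [mul_comm]
        gcongr
        linarith [Real.add_one_le_exp ‖L x‖]
  simp only [norm_smul, Real.norm_eq_abs, Real.abs_exp]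
  calc exp (R * ‖L x‖) * (|L x e| * ‖f x‖)
      ≤ exp (R * ‖L x‖) * (‖e‖ * exp ‖L x‖ * ‖f x‖) := by gcongr
    _ = ‖e‖ * (exp ((R + 1) * ‖L x‖) * ‖f x‖) := by rw [add_mul, one_mul, Real.exp_add]; ring

lemma hasFDerivAt_laplaceTransform (hf : ExpIntegrable μ L f) (v : V) :
    HasFDerivAt (laplaceTransform μ L f)
      (∫ x, (L x).smulRight (exp (L x v) • f x) ∂μ) v := by
  refine hasFDerivAt_integral_of_dominated_of_fderiv_le
    (F' := fun u x ↦ (L x).smulRight (exp (L x u) • f x)) (Metric.ball_mem_nhds v one_pos)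
    (.of_forall hf.aestronglyMeasurable_exp_smul) (hf.integrable_exp_smul v)
    (hf.aestronglyMeasurable_smulRight v)
    (.of_forall fun x u hu ↦ norm_smulRight_exp_smul_le (L x) (f x) ?_)
    (hf.integrable_exp_mul_norm_smul (‖v‖ + 1 + 1)).norm (.of_forall fun x u _ ↦ ?_)
  · exact (norm_lt_of_mem_ball hu).le
  · refine ((L x).hasFDerivAt.exp.smul_const (f x)).congr_fderiv ?_
    ext e
    simp only [ContinuousLinearMap.smulRight_apply, smul_apply, smul_smul, smul_eq_mul, mul_comm]

lemma fderiv_laplaceTransform_apply (hf : ExpIntegrable μ L f) (v e : V) :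
    fderiv ℝ (laplaceTransform μ L f) v e = laplaceTransform μ L (fun x ↦ L x e • f x) v := by
  rw [(hf.hasFDerivAt_laplaceTransform v).fderiv,
    ContinuousLinearMap.integral_apply (hf.integrable_smulRight v)]
  simp only [laplaceTransform, ContinuousLinearMap.smulRight_apply, smul_comm (L _ e)]

lemma differentiable_laplaceTransform (hf : ExpIntegrable μ L f) :
    Differentiable ℝ (laplaceTransform μ L f) :=
  fun v ↦ (hf.hasFDerivAt_laplaceTransform v).differentiableAt

lemma contDiff_laplaceTransform [FiniteDimensional ℝ V] (hf : ExpIntegrable μ L f) :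
    ContDiff ℝ ∞ (laplaceTransform μ L f) := by
  refine contDiff_infty.2 fun n ↦ ?_
  induction n generalizing f with
  | zero => exact contDiff_zero.2 hf.differentiable_laplaceTransform.continuous
  | succ n ih =>
    push_cast
    refine contDiff_succ_iff_fderiv_apply.2
      ⟨hf.differentiable_laplaceTransform, fun h ↦ absurd h (by simp), fun e ↦ ?_⟩
    simp only [hf.fderiv_laplaceTransform_apply]
    exact ih (hf.apply_smul e)

lemma contDiff_sTransform [FiniteDimensional ℝ V] (hf : ExpIntegrable μ L f)
    (B : V →L[ℝ] V →L[ℝ] ℝ) : ContDiff ℝ ∞ (sTransform μ L B f) := by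
  have h_weight : ContDiff ℝ ∞ fun v ↦ exp (-2⁻¹ * B v v) := by fun_prop
  exact h_weight.smul hf.contDiff_laplaceTransform

end ExpIntegrable

lemma hasFDerivAt_exp_neg_half_bilin {B : V →L[ℝ] V →L[ℝ] ℝ} (hB : ∀ u v, B u v = B v u) (v : V) :
    HasFDerivAt (fun v ↦ exp (-2⁻¹ * B v v)) (-(exp (-2⁻¹ * B v v) • B v)) v := by
  have h_form : HasFDerivAt (fun v ↦ -2⁻¹ * B v v) (-B v) v := by
    refine ((B.hasFDerivAt.clm_apply (hasFDerivAt_id v)).const_mul (-2⁻¹)).congr_fderiv ?_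
    ext e
    simp [hB e v]
    ring
  simpa only [smul_neg] using h_form.exp

namespace ExpIntegrable

variable {B : V →L[ℝ] V →L[ℝ] ℝ}

lemma hasFDerivAt_sTransform (hf : ExpIntegrable μ L f) (hB : ∀ u v, B u v = B v u) (v : V) :
    HasFDerivAt (sTransform μ L B f)
      (exp (-2⁻¹ * B v v) • fderiv ℝ (laplaceTransform μ L f) v
        + (-(exp (-2⁻¹ * B v v) • B v)).smulRight (laplaceTransform μ L f v)) v :=
  (hasFDerivAt_exp_neg_half_bilin hB v).smul (hf.differentiable_laplaceTransform v).hasFDerivAt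

lemma fderiv_sTransform_apply (hf : ExpIntegrable μ L f) (hB : ∀ u v, B u v = B v u) (v e : V) :
    fderiv ℝ (sTransform μ L B f) v e =
      sTransform μ L B (fun x ↦ L x e • f x) v - B e v • sTransform μ L B f v := by
  rw [(hf.hasFDerivAt_sTransform hB v).fderiv]
  simp only [add_apply, smul_apply, neg_apply, ContinuousLinearMap.smulRight_apply,
    hf.fderiv_laplaceTransform_apply, sTransform, hB e v]
  module

lemma differentiable_sTransform (hf : ExpIntegrable μ L f) (hB : ∀ u v, B u v = B v u) :
    Differentiable ℝ (sTransform μ L B f) :=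
  fun v ↦ (hf.hasFDerivAt_sTransform hB v).differentiableAt

end ExpIntegrable

lemma sTransform_zero (B : V →L[ℝ] V →L[ℝ] ℝ) : sTransform μ L B f 0 = ∫ x, f x ∂μ := by
  simp [sTransform, laplaceTransform]

lemma ExpIntegrable.fderiv_fderiv_sTransform_zero {B : V →L[ℝ] V →L[ℝ] ℝ}
    (hf : ExpIntegrable μ L f) (hB : ∀ u v, B u v = B v u) (p q : V) :
    fderiv ℝ (fun v ↦ fderiv ℝ (sTransform μ L B f) v q) 0 p =
      ∫ x, (L x p * L x q - B p q) • f x ∂μ := by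
  have hq := hf.apply_smul q
  have h_deriv := ((hq.differentiable_sTransform hB) 0).hasFDerivAt.fun_sub
    ((B q).hasFDerivAt.fun_smul ((hf.differentiable_sTransform hB) 0).hasFDerivAt)
  simp only [hf.fderiv_sTransform_apply hB]
  rw [h_deriv.fderiv]
  simp only [sub_apply, ContinuousLinearMap.smulRight_apply, hq.fderiv_sTransform_apply hB,
    map_zero, zero_smul, sub_zero, zero_add, sTransform_zero, sub_smul, mul_smul, hB q p]
  rw [← integral_smul]
  exact (integral_sub (hq.apply_smul p).integrable (hf.integrable.smul (B p q))).symm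

end STransform

section CameronMartin

variable {ι : Type*} [Fintype ι]

lemma pi_withDensity {X : ι → Type*} {mX : ∀ i, MeasurableSpace (X i)} (μ : ∀ i, Measure (X i))
    [∀ i, IsProbabilityMeasure (μ i)] {ρ : ∀ i, X i → ℝ≥0∞} (hρ : ∀ i, Measurable (ρ i))
    [∀ i, SigmaFinite ((μ i).withDensity (ρ i))] :
    Measure.pi (fun i ↦ (μ i).withDensity (ρ i)) =
      (Measure.pi μ).withDensity fun x ↦ ∏ i, ρ i (x i) := by
  classical
  refine Measure.pi_eq fun s hs ↦ ?_
  have h_meas (i : ι) : Measurable ((s i).indicator (ρ i)) := (hρ i).indicator (hs i)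
  have h_indicator (x : ∀ i, X i) : (Set.univ.pi s).indicator (fun x ↦ ∏ i, ρ i (x i)) x =
      ∏ i, (s i).indicator (ρ i) (x i) := by
    simp only [Set.indicator_apply, Set.mem_univ_pi, Finset.prod_ite_zero, Finset.mem_univ,
      forall_const]
  calc (Measure.pi μ).withDensity (fun x ↦ ∏ i, ρ i (x i)) (Set.univ.pi s)
      = ∫⁻ x, ∏ i, (s i).indicator (ρ i) (x i) ∂Measure.pi μ := by
        rw [withDensity_apply _ (.univ_pi hs), ← lintegral_indicator (.univ_pi hs)]
        exact lintegral_congr h_indicator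
    _ = ∏ i, ∫⁻ x, (s i).indicator (ρ i) (x i) ∂Measure.pi μ :=
        lintegral_prod_eq_prod_lintegral_of_indepFun _ _
          (iIndepFun_pi fun i ↦ (h_meas i).aemeasurable)
          fun i ↦ (h_meas i).comp (measurable_pi_apply i)
    _ = ∏ i, (μ i).withDensity (ρ i) (s i) := by
        refine Finset.prod_congr rfl fun i _ ↦ ?_
        rw [withDensity_apply _ (hs i), ← lintegral_indicator (hs i)]
        exact (measurePreserving_eval μ i).lintegral_comp (h_meas i)

lemma gaussianReal_eq_withDensity_exp {v : ℝ≥0} (hv : v ≠ 0) (u : ℝ) :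
    gaussianReal u v = (gaussianReal 0 v).withDensity
      fun x ↦ ENNReal.ofReal (exp ((u * x - u * u / 2) / v)) := by
  have hv' : (v : ℝ) ≠ 0 := NNReal.coe_ne_zero.2 hv
  rw [gaussianReal_of_var_ne_zero _ hv, gaussianReal_of_var_ne_zero _ hv,
    ← withDensity_mul _ (measurable_gaussianPDF 0 v) (by fun_prop)]
  congr 1
  ext x
  simp only [gaussianPDF, Pi.mul_apply, gaussianPDFReal]
  rw [← ENNReal.ofReal_mul (by positivity), mul_assoc (√(2 * Real.pi * v))⁻¹, ← Real.exp_add]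
  congr 3
  field_simp
  ring

lemma pi_gaussianReal_map_const_add (v : ℝ≥0) (u : ι → ℝ) :
    (Measure.pi fun _ ↦ gaussianReal 0 v).map (u + ·) =
      Measure.pi fun i ↦ gaussianReal (u i) v := by
  have h_coord (i : ι) : (gaussianReal 0 v).map (fun y ↦ u i + y) = gaussianReal (u i) v := by
    rw [gaussianReal_map_const_add, zero_add]
  have (i : ι) : SigmaFinite ((gaussianReal 0 v).map (fun y ↦ u i + y)) := by
    rw [h_coord]; infer_instance
  simp only [← h_coord]
  exact Measure.pi_map_pi fun i ↦ (measurable_const_add (u i)).aemeasurable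

lemma pi_gaussianReal_eq_withDensity_exp {v : ℝ≥0} (hv : v ≠ 0) (u : ι → ℝ) :
    (Measure.pi fun i ↦ gaussianReal (u i) v) =
      (Measure.pi fun _ ↦ gaussianReal 0 v).withDensity
        fun w ↦ ENNReal.ofReal (exp ((u ⬝ᵥ w - u ⬝ᵥ u / 2) / v)) := by
  simp only [fun i ↦ gaussianReal_eq_withDensity_exp hv (u i)]
  rw [pi_withDensity _ fun i ↦ by fun_prop]
  congr 1
  ext w
  rw [← ENNReal.ofReal_prod_of_nonneg fun i _ ↦ (Real.exp_pos _).le, ← Real.exp_sum]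
  simp only [dotProduct, Finset.sum_div, ← Finset.sum_sub_distrib]

lemma integral_const_add_pi_gaussianReal {E : Type*} [NormedAddCommGroup E] [NormedSpace ℝ E]
    {v : ℝ≥0} (hv : v ≠ 0) (u : ι → ℝ) (f : (ι → ℝ) → E) :
    ∫ w, f (u + w) ∂(Measure.pi fun _ ↦ gaussianReal 0 v) =
      ∫ w, exp ((u ⬝ᵥ w - u ⬝ᵥ u / 2) / v) • f w ∂(Measure.pi fun _ ↦ gaussianReal 0 v) := by
  have h_meas : Measurable fun w ↦ ENNReal.ofReal (exp ((u ⬝ᵥ w - u ⬝ᵥ u / 2) / v)) := by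
    unfold dotProduct
    fun_prop
  rw [← (measurableEmbedding_addLeft u).integral_map, pi_gaussianReal_map_const_add,
    pi_gaussianReal_eq_withDensity_exp hv,
    integral_withDensity_eq_integral_toReal_smul h_meas (.of_forall fun _ ↦ ENNReal.ofReal_lt_top)]
  simp only [ENNReal.toReal_ofReal (Real.exp_pos _).le]

end CameronMartin

section ExponentialGrowth

/-- At most exponential growth at infinity. -/
def HasExpGrowth {W E : Type*} [Norm W] [Norm E] (f : W → E) : Prop :=
  ∃ C R : ℝ, ∀ y, ‖f y‖ ≤ C * exp (R * ‖y‖)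

lemma HasExpGrowth.of_norm_le {W E : Type*} [Norm W] [Norm E] {f : W → E} {M : ℝ}
    (hf : ∀ y, ‖f y‖ ≤ M) : HasExpGrowth f :=
  ⟨M, 0, by simpa using hf⟩

variable {W W' E : Type*} [NormedAddCommGroup W] [NormedSpace ℝ W] [NormedAddCommGroup W']
  [NormedSpace ℝ W'] [NormedAddCommGroup E]

lemma HasExpGrowth.comp_const_add {f : W' → E} (hf : HasExpGrowth f) (a : W') (A : W →L[ℝ] W') :
    HasExpGrowth fun w ↦ f (a + A w) := by
  obtain ⟨C, R, hf⟩ := hf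
  have hC : 0 ≤ C := by simpa using (norm_nonneg _).trans (hf 0)
  refine ⟨C * exp (|R| * ‖a‖), |R| * ‖A‖, fun w ↦ ?_⟩
  have h_norm : ‖a + A w‖ ≤ ‖a‖ + ‖A‖ * ‖w‖ :=
    (norm_add_le _ _).trans (by gcongr; exact A.le_opNorm w)
  calc ‖f (a + A w)‖ ≤ C * exp (R * ‖a + A w‖) := hf _
    _ ≤ C * exp (|R| * (‖a‖ + ‖A‖ * ‖w‖)) := by gcongr; exact le_abs_self R
    _ = C * exp (|R| * ‖a‖) * exp (|R| * ‖A‖ * ‖w‖) := by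
      rw [mul_assoc C, ← Real.exp_add]; ring_nf

lemma integrable_exp_mul_norm_pi {ι : Type*} [Fintype ι] {μ : ι → Measure ℝ}
    [∀ i, SigmaFinite (μ i)] (hμ : ∀ i (r : ℝ), Integrable (fun x ↦ exp (r * x)) (μ i)) (R : ℝ) :
    Integrable (fun w ↦ exp (R * ‖w‖)) (Measure.pi μ) := by
  have h_prod : Integrable (fun w ↦ ∏ i, exp (|R| * |w i|)) (Measure.pi μ) :=
    Integrable.fintype_prod (f := fun _ x ↦ exp (|R| * |x|))
      fun i ↦ integrable_exp_mul_abs (hμ i |R|) (hμ i (-|R|))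
  refine h_prod.mono' (by fun_prop) (.of_forall fun w ↦ ?_)
  have h_norm : ‖w‖ ≤ ∑ i, |w i| :=
    (pi_norm_le_iff_of_nonneg (by positivity)).2 fun i ↦
      Finset.single_le_sum (f := fun i ↦ |w i|) (fun _ _ ↦ abs_nonneg _) (Finset.mem_univ i)
  rw [Real.norm_eq_abs, Real.abs_exp, ← Real.exp_sum, ← Finset.mul_sum]
  gcongr
  exact le_abs_self R

lemma HasExpGrowth.expIntegrable {V : Type*} [NormedAddCommGroup V] [NormedSpace ℝ V]
    [NormedSpace ℝ E] {mW : MeasurableSpace W} {μ : Measure W} {f : W → E} (hf : HasExpGrowth f)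
    (hf_meas : AEStronglyMeasurable f μ) (hμ : ∀ R : ℝ, Integrable (fun w ↦ exp (R * ‖w‖)) μ)
    {L : W →L[ℝ] StrongDual ℝ V} (hL : AEStronglyMeasurable L μ) :
    ExpIntegrable μ L f := by
  obtain ⟨C, R₀, hf⟩ := hf
  refine ⟨hL, fun R ↦ ((hμ (|R| * ‖L‖ + R₀)).const_mul C).mono'
    ((Real.continuous_exp.comp_aestronglyMeasurable (hL.norm.const_mul R)).smul hf_meas)
    (.of_forall fun w ↦ ?_)⟩
  rw [norm_smul, Real.norm_eq_abs, Real.abs_exp]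
  calc exp (R * ‖L w‖) * ‖f w‖
      ≤ exp (|R| * (‖L‖ * ‖w‖)) * (C * exp (R₀ * ‖w‖)) := by
        gcongr
        · exact le_abs_self R
        · exact L.le_opNorm w
        · exact hf w
    _ = C * exp ((|R| * ‖L‖ + R₀) * ‖w‖) := by
        rw [mul_left_comm, ← Real.exp_add]; ring_nf

end ExponentialGrowth

section AffineGaussian

variable {ι : Type*} [Fintype ι] [DecidableEq ι] {E : Type*} [NormedAddCommGroup E]
  [NormedSpace ℝ E]

/-- The random functional `z ↦ ⟨w, σ⁻¹ z⟩ / t` in the exponent of the Cameron–Martin density for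
the shift of `w ∼ N(0, t I)` by `σ⁻¹ z`. -/
noncomputable def cameronMartinFunctional (σ : Matrix ι ι ℝ) (t : ℝ) :
    (ι → ℝ) →L[ℝ] StrongDual ℝ (ι → ℝ) :=
  (Matrix.toLinearMap₂' ℝ (t⁻¹ • σ⁻¹)).toContinuousBilinearMap

/-- The covariance `(p, q) ↦ ⟨σ⁻¹ p, σ⁻¹ q⟩ / t` of `cameronMartinFunctional σ t` under
`N(0, t I)`. -/
noncomputable def cameronMartinForm (σ : Matrix ι ι ℝ) (t : ℝ) :
    (ι → ℝ) →L[ℝ] (ι → ℝ) →L[ℝ] ℝ :=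
  (Matrix.toLinearMap₂' ℝ (t⁻¹ • (σ⁻¹ᵀ * σ⁻¹))).toContinuousBilinearMap

/-- The second-order automatic differentiation weight
`(σᵀ)⁻¹ ((w wᵀ - t I) / t²) σ⁻¹` at the Gaussian increment `w`. -/
noncomputable def hessianWeight (σ : Matrix ι ι ℝ) (t : ℝ) (w : ι → ℝ) : Matrix ι ι ℝ :=
  σᵀ⁻¹ * Matrix.of (fun a c ↦ (w a * w c - (if a = c then t else 0)) / t ^ 2) * σ⁻¹

lemma cameronMartinFunctional_apply (σ : Matrix ι ι ℝ) (t : ℝ) (w z : ι → ℝ) :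
    cameronMartinFunctional σ t w z = t⁻¹ * w ⬝ᵥ σ⁻¹ *ᵥ z := by
  rw [cameronMartinFunctional, LinearMap.toContinuousBilinearMap_apply,
    Matrix.toLinearMap₂'_apply', Matrix.smul_mulVec, dotProduct_smul, smul_eq_mul]

lemma cameronMartinForm_apply (σ : Matrix ι ι ℝ) (t : ℝ) (p q : ι → ℝ) :
    cameronMartinForm σ t p q = t⁻¹ * (σ⁻¹ *ᵥ p) ⬝ᵥ (σ⁻¹ *ᵥ q) := by
  rw [cameronMartinForm, LinearMap.toContinuousBilinearMap_apply, Matrix.toLinearMap₂'_apply',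
    Matrix.smul_mulVec, dotProduct_smul, smul_eq_mul, ← Matrix.mulVec_mulVec,
    Matrix.dotProduct_mulVec, Matrix.vecMul_transpose]

lemma cameronMartinForm_symm (σ : Matrix ι ι ℝ) (t : ℝ) (p q : ι → ℝ) :
    cameronMartinForm σ t p q = cameronMartinForm σ t q p := by
  rw [cameronMartinForm_apply, cameronMartinForm_apply, dotProduct_comm]

lemma dotProduct_hessianWeight_mulVec (σ : Matrix ι ι ℝ) {t : ℝ} (ht : t ≠ 0) (w p q : ι → ℝ) :
    p ⬝ᵥ hessianWeight σ t w *ᵥ q =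
      cameronMartinFunctional σ t w p * cameronMartinFunctional σ t w q
        - cameronMartinForm σ t p q := by
  have h_mid : Matrix.of (fun a c ↦ (w a * w c - (if a = c then t else 0)) / t ^ 2) =
      (t ^ 2)⁻¹ • (Matrix.vecMulVec w w - t • (1 : Matrix ι ι ℝ)) := by
    ext a c
    simp [Matrix.vecMulVec_apply, Matrix.one_apply, div_eq_inv_mul]
  have h_adjoint (y : ι → ℝ) : p ⬝ᵥ σᵀ⁻¹ *ᵥ y = (σ⁻¹ *ᵥ p) ⬝ᵥ y := by
    rw [← Matrix.transpose_nonsing_inv, Matrix.dotProduct_mulVec, Matrix.vecMul_transpose]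
  rw [hessianWeight, h_mid, ← Matrix.mulVec_mulVec, ← Matrix.mulVec_mulVec, h_adjoint,
    Matrix.smul_mulVec, Matrix.sub_mulVec, Matrix.vecMulVec_mulVec, Matrix.smul_mulVec,
    Matrix.one_mulVec, cameronMartinFunctional_apply, cameronMartinFunctional_apply,
    cameronMartinForm_apply]
  simp only [dotProduct_smul, dotProduct_sub, dotProduct_comm _ w, op_smul_eq_smul, smul_eq_mul]
  field_simp

lemma integral_add_affine_eq_sTransform {t : ℝ≥0} (ht : t ≠ 0) {σ : Matrix ι ι ℝ}
    (hσ : IsUnit σ.det) (φ : (ι → ℝ) → E) (a z : ι → ℝ) :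
    ∫ w, φ (a + z + σ *ᵥ w) ∂(Measure.pi fun _ ↦ gaussianReal 0 t) =
      sTransform (Measure.pi fun _ ↦ gaussianReal 0 t) (cameronMartinFunctional σ t)
        (cameronMartinForm σ t) (fun w ↦ φ (a + σ *ᵥ w)) z := by
  have h_shift (w : ι → ℝ) : a + z + σ *ᵥ w = a + σ *ᵥ (σ⁻¹ *ᵥ z + w) := by
    rw [Matrix.mulVec_add, Matrix.mulVec_mulVec, Matrix.mul_nonsing_inv _ hσ, Matrix.one_mulVec,
      add_assoc]
  have h_exponent (w : ι → ℝ) :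
      ((σ⁻¹ *ᵥ z) ⬝ᵥ w - (σ⁻¹ *ᵥ z) ⬝ᵥ (σ⁻¹ *ᵥ z) / 2) / t =
        -2⁻¹ * cameronMartinForm σ t z z + cameronMartinFunctional σ t w z := by
    rw [cameronMartinForm_apply, cameronMartinFunctional_apply, dotProduct_comm w]
    ring
  simp only [h_shift]
  rw [integral_const_add_pi_gaussianReal ht _ fun w ↦ φ (a + σ *ᵥ w), sTransform, laplaceTransform,
    ← integral_smul]
  simp only [h_exponent, Real.exp_add, mul_smul]

lemma expIntegrable_comp_affine (t : ℝ≥0) (σ : Matrix ι ι ℝ) {φ : (ι → ℝ) → E}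
    (hφ : StronglyMeasurable φ) (hφ_growth : HasExpGrowth φ) (a : ι → ℝ) :
    ExpIntegrable (Measure.pi fun _ ↦ gaussianReal 0 t) (cameronMartinFunctional σ t)
      (fun w ↦ φ (a + σ *ᵥ w)) := by
  have h_growth : HasExpGrowth fun w ↦ φ (a + σ *ᵥ w) :=
    hφ_growth.comp_const_add a (LinearMap.toContinuousLinearMap σ.mulVecLin)
  have h_affine : Continuous fun w ↦ a + σ *ᵥ w := by fun_prop
  exact h_growth.expIntegrable (hφ.comp_measurable h_affine.measurable).aestronglyMeasurable
    (integrable_exp_mul_norm_pi fun _ ↦ integrable_exp_mul_gaussianReal)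
    (cameronMartinFunctional σ t).continuous.aestronglyMeasurable

theorem gaussian_ibp_second_order_general [CompleteSpace E] {t : ℝ≥0} (ht : t ≠ 0) (m : ι → ℝ)
    {σ : Matrix ι ι ℝ} (hσ : IsUnit σ.det) {φ : (ι → ℝ) → E} (hφ : StronglyMeasurable φ)
    (hφ_growth : HasExpGrowth φ) {F : (ι → ℝ) → E}
    (hF : ∀ z, F z = ∫ w, φ (z + m + σ *ᵥ w) ∂(Measure.pi fun _ ↦ gaussianReal 0 t)) :
    ContDiff ℝ ∞ F ∧ ∀ x p q : ι → ℝ,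
      fderiv ℝ (fun y ↦ fderiv ℝ F y q) x p =
        ∫ w, (p ⬝ᵥ hessianWeight σ t w *ᵥ q) • φ (x + m + σ *ᵥ w)
          ∂(Measure.pi fun _ ↦ gaussianReal 0 t) := by
  have h_int (x : ι → ℝ) := expIntegrable_comp_affine t σ hφ hφ_growth (x + m)
  have h_shift (x : ι → ℝ) : (fun z ↦ F (x + z)) =
      sTransform (Measure.pi fun _ ↦ gaussianReal 0 t) (cameronMartinFunctional σ t)
        (cameronMartinForm σ t) (fun w ↦ φ (x + m + σ *ᵥ w)) := by
    ext z
    rw [hF, add_right_comm, integral_add_affine_eq_sTransform ht hσ]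
  refine ⟨?_, fun x p q ↦ ?_⟩
  · have h_smooth := (h_int 0).contDiff_sTransform (cameronMartinForm σ t)
    rw [← h_shift] at h_smooth
    simpa only [zero_add] using h_smooth
  · calc fderiv ℝ (fun y ↦ fderiv ℝ F y q) x p
        = fderiv ℝ (fun z ↦ fderiv ℝ F (x + z) q) 0 p := by
          rw [fderiv_comp_add_left (f := fun y ↦ fderiv ℝ F y q), add_zero]
      _ = fderiv ℝ (fun z ↦ fderiv ℝ (fun z ↦ F (x + z)) z q) 0 p := by
          simp only [fderiv_comp_add_left]
      _ = _ := by
          rw [h_shift, (h_int x).fderiv_fderiv_sTransform_zero (cameronMartinForm_symm σ t)]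
          simp only [dotProduct_hessianWeight_mulVec σ (NNReal.coe_ne_zero.2 ht)]

end AffineGaussian

/-- Gaussian integration by parts for second derivatives: with `W_t ∼ N(0, t I_d)`,
the Hessian of `x ↦ E[φ(x + bt + σ₀ W_t)]` is
`E[φ(x + bt + σ₀ W_t) (σ₀ᵀ)⁻¹ ((W_t W_tᵀ - t I_d)/t²) σ₀⁻¹]`. -/
theorem gaussian_ibp_second_order
    (d : ℕ) (t : ℝ) (ht : 0 < t) (x b : Fin d → ℝ)
    (σ0 : Matrix (Fin d) (Fin d) ℝ) (hσ : IsUnit σ0.det)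
    (φ : (Fin d → ℝ) → ℝ) (hφc : Continuous φ) (hφb : ∃ M, ∀ y, |φ y| ≤ M)
    (ν : Measure (Fin d → ℝ))
    (hν : ν = Measure.pi fun _ => gaussianReal 0 ⟨t, ht.le⟩)
    (F : (Fin d → ℝ) → ℝ)
    (hF : ∀ z, F z = ∫ w, φ (fun i => z i + b i * t + σ0.mulVec w i) ∂ν) :
    ContDiff ℝ 2 F ∧
    ∀ i j : Fin d,
      fderiv ℝ (fun y => fderiv ℝ F y (Pi.single j 1)) x (Pi.single i 1)
        = ∫ w, φ (fun i => x i + b i * t + σ0.mulVec w i) *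
            ((σ0.transpose)⁻¹ *
              Matrix.of (fun a c => (w a * w c - (if a = c then t else 0)) / t ^ 2) *
              σ0⁻¹) i j ∂ν := by
  obtain ⟨M, hM⟩ := hφb
  subst hν
  have ht' : (⟨t, ht.le⟩ : ℝ≥0) ≠ 0 := fun h ↦ ht.ne' (congrArg NNReal.toReal h)
  obtain ⟨h_smooth, h_hessian⟩ := gaussian_ibp_second_order_general ht' (fun i ↦ b i * t) hσ
    hφc.stronglyMeasurable (.of_norm_le hM) hF
  refine ⟨mod_cast contDiff_infty.1 h_smooth 2, fun i j ↦ ?_⟩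
  rw [h_hessian]
  refine integral_congr_ae (.of_forall fun w ↦ ?_)
  simp only [Matrix.mulVec_single_one, single_one_dotProduct, smul_eq_mul, mul_comm (φ _)]
  rfl
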